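/- Pyramidal growth in the plane: for any two convex polygons P ⊆ Q in ℝ², there exists a finite chain P = P₀ ⊂_Δ P₁ ⊂_Δ … ⊂_Δ P_n = Q of pyramidal extensions (each step stacks a triangle onto an edge or takes a pyramid over a segment). -/

import Mathlib

open Set

noncomputable section

/-- A polytope: the convex hull of a finite set of points. -/
def IsPolytope {E : Type*} [AddCommGroup E] [Module ℝ E] (P : Set E) : Prop :=
  ∃ s : Finset E, P = convexHull ℝ (s : Set E)

/-- The dimension of a set: the dimension of its affine hull. -/
def polyDim {E : Type*} [AddCommGroup E] [Module ℝ E] (P : Set E) : ℕ :=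
  Module.finrank ℝ (affineSpan ℝ P).direction

/-- A facet: an exposed face of dimension one less. -/
def IsFacet {E : Type*} [NormedAddCommGroup E] [NormedSpace ℝ E] (F P : Set E) : Prop :=
  IsExposed ℝ P F ∧ polyDim F + 1 = polyDim P

/-- `Δ` is a pyramid with base the polytope `B` and apex `v`. -/
def IsPyramidOver {E : Type*} [AddCommGroup E] [Module ℝ E]
    (Δ B : Set E) (v : E) : Prop :=
  IsPolytope B ∧ v ∉ affineSpan ℝ B ∧ Δ = convexHull ℝ (B ∪ {v})

/-- Pyramidal extension: `closure (Q \ P)` is a pyramid whose intersection with `P`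
is a facet of it. -/
def PyramidalExt {E : Type*} [NormedAddCommGroup E] [NormedSpace ℝ E]
    (P Q : Set E) : Prop :=
  IsPolytope P ∧ IsPolytope Q ∧ P ⊆ Q ∧
    (∃ B v, IsPyramidOver (closure (Q \ P)) B v) ∧
    IsFacet (closure (Q \ P) ∩ P) (closure (Q \ P))

end

/-!
It suffices to add the vertices of `Q` one at a time, so let `v` be a point outside `conv t`.
Take a line through `v` that supports `conv t`, and let `w` be the point of `t` on this line that
is nearest to `v`. Move an apex `u` from `w` towards `v`. At first `u` sees only the edge at `w`
that faces `v`, and this remains so until `u` reaches `v` or the line through the next edge. At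
that moment `conv (t ∪ {u})` arises from `conv t` by stacking a triangle on the visible edge. If
`v` has not been reached, the next edge extends to `u` and takes the role of the first one, and
fewer points of `t` lie beyond its far end, so that the process terminates at `v`. It can be
started with the point `w` as a degenerate edge; this is the visible face if `conv t` lies on the
supporting line.
-/

section Segments

variable {E F : Type*} [AddCommGroup E] [Module ℝ E] [AddCommGroup F] [Module ℝ F]

theorem mem_segment_of_injOn {S : Set E} (hS : Convex ℝ S) {L : E →ₗ[ℝ] F} (hL : InjOn L S)
    {a b x : E} (ha : a ∈ S) (hb : b ∈ S) (hx : x ∈ S) (h : L x ∈ segment ℝ (L a) (L b)) :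
    x ∈ segment ℝ a b := by
  obtain ⟨y, hy, hyx⟩ := (image_segment ℝ L.toAffineMap a b).ge h
  exact hL (hS.segment_subset ha hb hy) hx hyx ▸ hy

theorem injOn_segment_of_apply_ne {L : E →ₗ[ℝ] ℝ} {a b : E} (h : L a ≠ L b) :
    InjOn L (segment ℝ a b) := by
  rw [segment_eq_image_lineMap]
  rintro _ ⟨s, -, rfl⟩ _ ⟨t, -, rfl⟩ hst
  have hL (r : ℝ) : L (AffineMap.lineMap a b r) = AffineMap.lineMap (L a) (L b) r :=
    L.toAffineMap.apply_lineMap a b r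
  rw [hL, hL] at hst
  rw [AffineMap.lineMap_injective ℝ h hst]

theorem apply_mem_Icc_of_mem_segment (L : E →ₗ[ℝ] ℝ) {a b x : E} (h : L a ≤ L b)
    (hx : x ∈ segment ℝ a b) : L x ∈ Icc (L a) (L b) := by
  rw [← segment_eq_Icc h]
  exact (image_segment ℝ L.toAffineMap a b).le (mem_image_of_mem L hx)

theorem mem_segment_of_apply_le {L : E →ₗ[ℝ] ℝ} {a b x y : E} (h : L a < L b)
    (hx : x ∈ segment ℝ a b) (hy : y ∈ segment ℝ a b) (hxy : L x ≤ L y) :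
    x ∈ segment ℝ a y ∧ y ∈ segment ℝ x b := by
  have hinj : InjOn L (segment ℝ a b) := injOn_segment_of_apply_ne h.ne
  have hLx : L a ≤ L x := (apply_mem_Icc_of_mem_segment L h.le hx).1
  have hLy : L y ≤ L b := (apply_mem_Icc_of_mem_segment L h.le hy).2
  refine ⟨mem_segment_of_injOn (convex_segment a b) hinj (left_mem_segment ℝ a b) hy hx ?_,
    mem_segment_of_injOn (convex_segment a b) hinj hx (right_mem_segment ℝ a b) hy ?_⟩
  · rw [segment_eq_Icc (hLx.trans hxy)]
    exact ⟨hLx, hxy⟩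
  · rw [segment_eq_Icc (hxy.trans hLy)]
    exact ⟨hxy, hLy⟩

theorem exists_mem_segment_apply_eq (L : E →ₗ[ℝ] ℝ) {a b : E} {c : ℝ} (ha : L a ≤ c)
    (hb : c ≤ L b) : ∃ x ∈ segment ℝ a b, L x = c :=
  (image_segment ℝ L.toAffineMap a b).ge <| by
    simpa [segment_eq_Icc (ha.trans hb)] using And.intro ha hb

theorem apply_eq_of_mem_segment (L : E →ₗ[ℝ] F) {a b x : E} (h : L a = L b)
    (hx : x ∈ segment ℝ a b) : L x = L a := by
  have hLx : L x ∈ segment ℝ (L a) (L b) :=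
    (image_segment ℝ L.toAffineMap a b).le (mem_image_of_mem L hx)
  rwa [← h, segment_same] at hLx

theorem le_apply_of_mem_convexHull (L : E →ₗ[ℝ] ℝ) {s : Set E} {c : ℝ} (h : ∀ p ∈ s, c ≤ L p)
    {x : E} (hx : x ∈ convexHull ℝ s) : c ≤ L x :=
  convexHull_min h (convex_halfSpace_ge L.isLinear c) hx

theorem convexHull_insert_eq_of_mem {s : Set E} {x : E} (hx : x ∈ convexHull ℝ s) :
    convexHull ℝ (insert x s) = convexHull ℝ s :=
  (convexHull_min (insert_subset hx (subset_convexHull ℝ s)) (convex_convexHull ℝ s)).antisymm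
    (convexHull_mono (subset_insert x s))

theorem convexHull_insert_convexHull (s : Set E) (x : E) :
    convexHull ℝ (insert x (convexHull ℝ s)) = convexHull ℝ (insert x s) := by
  simp only [← singleton_union, convexHull_convexHull_union_right]

end Segments

section Polytopes

variable {E : Type*} [AddCommGroup E] [Module ℝ E]

theorem isPolytope_convexHull {t : Set E} (ht : t.Finite) : IsPolytope (convexHull ℝ t) :=
  ⟨ht.toFinset, by rw [ht.coe_toFinset]⟩

namespace IsPolytope

variable {P : Set E}

theorem convex (hP : IsPolytope P) : Convex ℝ P := by
  obtain ⟨s, rfl⟩ := hP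
  exact convex_convexHull ℝ _

theorem convexHull_insert (hP : IsPolytope P) (u : E) :
    IsPolytope (convexHull ℝ (insert u P)) := by
  obtain ⟨s, rfl⟩ := hP
  rw [convexHull_insert_convexHull]
  exact isPolytope_convexHull (s.finite_toSet.insert u)

theorem finiteDimensional_direction (hP : IsPolytope P) :
    FiniteDimensional ℝ (affineSpan ℝ P).direction := by
  obtain ⟨s, rfl⟩ := hP
  rw [affineSpan_convexHull]
  exact finiteDimensional_direction_affineSpan_of_finite ℝ s.finite_toSet

theorem polyDim_convexHull_insert (hP : IsPolytope P) (hne : P.Nonempty) {u : E}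
    (hu : u ∉ affineSpan ℝ P) : polyDim (convexHull ℝ (insert u P)) = polyDim P + 1 := by
  have := hP.finiteDimensional_direction
  obtain ⟨p, hp⟩ := hne
  have hp' : p ∈ affineSpan ℝ P := subset_affineSpan ℝ P hp
  have hup : u -ᵥ p ∉ (affineSpan ℝ P).direction := fun h =>
    hu ((AffineSubspace.vsub_right_mem_direction_iff_mem hp' u).1 h)
  have hinf : (affineSpan ℝ P).direction ⊓ Submodule.span ℝ {u -ᵥ p} = ⊥ :=
    disjoint_iff.1 (Submodule.disjoint_span_singleton_of_notMem hup)
  have hrank := Submodule.finrank_sup_add_finrank_inf_eq (affineSpan ℝ P).direction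
    (Submodule.span ℝ {u -ᵥ p})
  rw [hinf, finrank_bot, finrank_span_singleton (ne_of_mem_of_not_mem (zero_mem _) hup).symm]
    at hrank
  rw [polyDim, affineSpan_convexHull, ← affineSpan_insert_affineSpan,
    AffineSubspace.direction_affineSpan_insert hp', sup_comm]
  exact hrank

theorem isClosed [TopologicalSpace E] [IsTopologicalAddGroup E] [ContinuousSMul ℝ E] [T2Space E]
    (hP : IsPolytope P) : IsClosed P := by
  obtain ⟨s, rfl⟩ := hP
  exact s.finite_toSet.isClosed_convexHull ℝ

end IsPolytope

end Polytopes

section Stacking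

variable {E : Type*} [NormedAddCommGroup E] [NormedSpace ℝ E]

/-- The point `u` lies beyond the face `B` of `P` and beyond no other face: the hyperplane
`g = c` separates `u` from `P`, and it meets the convex hull of `P` and `u` exactly in `B`. -/
structure IsBeyond (P B : Set E) (u : E) (g : E →L[ℝ] ℝ) (c : ℝ) : Prop where
  lt : g u < c
  le : ∀ x ∈ P, c ≤ g x
  subset : B ⊆ P
  mem_iff : ∀ x, x ∈ B ↔ x ∈ convexHull ℝ (insert u P) ∧ g x = c

namespace IsBeyond

variable {P B : Set E} {u x : E} {g : E →L[ℝ] ℝ} {c : ℝ}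

theorem apply_eq (h : IsBeyond P B u g c) (hx : x ∈ B) : g x = c :=
  ((h.mem_iff x).1 hx).2

theorem exists_mem_segment (h : IsBeyond P B u g c) (hP : Convex ℝ P) (hne : P.Nonempty)
    (hx : x ∈ convexHull ℝ (insert u P)) :
    ∃ p ∈ P, ∃ m ∈ B, x ∈ segment ℝ u p ∧ m ∈ segment ℝ u p := by
  rw [convexHull_insert hne, hP.convexHull_eq, convexJoin_singleton_left, mem_iUnion₂] at hx
  obtain ⟨p, hp, hx⟩ := hx
  obtain ⟨m, hm, hgm⟩ := exists_mem_segment_apply_eq (g : E →ₗ[ℝ] ℝ) h.lt.le (h.le p hp)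
  have hmem : m ∈ convexHull ℝ (insert u P) :=
    segment_subset_convexHull (mem_insert u P) (mem_insert_of_mem u hp) hm
  exact ⟨p, hp, m, (h.mem_iff m).2 ⟨hmem, hgm⟩, hx, hm⟩

theorem mem_of_le (h : IsBeyond P B u g c) (hP : Convex ℝ P) (hne : P.Nonempty)
    (hx : x ∈ convexHull ℝ (insert u P)) (hgx : c ≤ g x) : x ∈ P := by
  obtain ⟨p, hp, m, hm, hxp, hmp⟩ := h.exists_mem_segment hP hne hx
  have hxm : x ∈ segment ℝ m p := (mem_segment_of_apply_le (L := (g : E →ₗ[ℝ] ℝ))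
    (h.lt.trans_le (h.le p hp)) hmp hxp ((h.apply_eq hm).trans_le hgx)).2
  exact hP.segment_subset (h.subset hm) hp hxm

theorem mem_convexHull_of_le (h : IsBeyond P B u g c) (hP : Convex ℝ P) (hne : P.Nonempty)
    (hx : x ∈ convexHull ℝ (insert u P)) (hgx : g x ≤ c) : x ∈ convexHull ℝ (insert u B) := by
  obtain ⟨p, hp, m, hm, hxp, hmp⟩ := h.exists_mem_segment hP hne hx
  have hxm : x ∈ segment ℝ u m := (mem_segment_of_apply_le (L := (g : E →ₗ[ℝ] ℝ))
    (h.lt.trans_le (h.le p hp)) hxp hmp (hgx.trans_eq (h.apply_eq hm).symm)).1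
  exact segment_subset_convexHull (mem_insert u B) (mem_insert_of_mem u hm) hxm

theorem convexHull_insert_subset (h : IsBeyond P B u g c) :
    convexHull ℝ (insert u B) ⊆ convexHull ℝ (insert u P) :=
  convexHull_mono (insert_subset_insert h.subset)

theorem apply_le (h : IsBeyond P B u g c) (hx : x ∈ convexHull ℝ (insert u B)) : g x ≤ c := by
  refine convexHull_min ?_ (convex_halfSpace_le (g : E →ₗ[ℝ] ℝ).isLinear c) hx
  exact insert_subset h.lt.le fun y hy => (h.apply_eq hy).le

theorem openSegment_subset_diff (h : IsBeyond P B u g c)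
    (hx : x ∈ convexHull ℝ (insert u B)) :
    openSegment ℝ u x ⊆ convexHull ℝ (insert u P) \ P := by
  intro y hy
  have hux : openSegment ℝ u x ⊆ convexHull ℝ (insert u P) :=
    (convex_convexHull ℝ _).openSegment_subset (subset_convexHull ℝ _ (mem_insert u P))
      (h.convexHull_insert_subset hx)
  refine ⟨hux hy, fun hyP => (h.le y hyP).not_gt ?_⟩
  obtain ⟨a, b, ha, hb, hab, rfl⟩ := hy
  calc g (a • u + b • x) = a * g u + b * g x := by simp
    _ < a * c + b * c := add_lt_add_of_lt_of_le (mul_lt_mul_of_pos_left h.lt ha)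
        (mul_le_mul_of_nonneg_left (h.apply_le hx) hb.le)
    _ = c := by rw [← add_mul, hab, one_mul]

theorem closure_diff (h : IsBeyond P B u g c) (hP : Convex ℝ P) (hne : P.Nonempty)
    (hB : IsPolytope B) :
    closure (convexHull ℝ (insert u P) \ P) = convexHull ℝ (insert u B) := by
  refine (closure_minimal ?_ (hB.convexHull_insert u).isClosed).antisymm fun x hx => ?_
  · rintro x ⟨hx, hxP⟩
    exact h.mem_convexHull_of_le hP hne hx
      (not_le.1 fun hgx => hxP (h.mem_of_le hP hne hx hgx)).le
  · exact closure_mono (h.openSegment_subset_diff hx)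
      (segment_subset_closure_openSegment (right_mem_segment ℝ u x))

theorem mem_of_apply_eq (h : IsBeyond P B u g c) (hx : x ∈ convexHull ℝ (insert u B))
    (hgx : g x = c) : x ∈ B :=
  (h.mem_iff x).2 ⟨h.convexHull_insert_subset hx, hgx⟩

theorem convexHull_insert_inter (h : IsBeyond P B u g c) :
    convexHull ℝ (insert u B) ∩ P = B :=
  Subset.antisymm (fun x hx => h.mem_of_apply_eq hx.1 ((h.apply_le hx.1).antisymm (h.le x hx.2)))
    (subset_inter ((subset_insert u B).trans (subset_convexHull ℝ _)) h.subset)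

theorem isExposed (h : IsBeyond P B u g c) : IsExposed ℝ (convexHull ℝ (insert u B)) B := by
  rintro ⟨b, hb⟩
  have hB : B ⊆ convexHull ℝ (insert u B) := (subset_insert u B).trans (subset_convexHull ℝ _)
  refine ⟨g, Subset.antisymm (fun x hx => ⟨hB hx, fun y hy => ?_⟩) fun x hx => ?_⟩
  · exact (h.apply_le hy).trans_eq (h.apply_eq hx).symm
  · exact h.mem_of_apply_eq hx.1
      ((h.apply_le hx.1).antisymm ((h.apply_eq hb).symm.trans_le (hx.2 b (hB hb))))

theorem notMem_affineSpan (h : IsBeyond P B u g c) : u ∉ affineSpan ℝ B := fun hu =>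
  h.lt.ne <| AffineMap.eqOn_affineSpan (f := (g : E →ₗ[ℝ] ℝ).toAffineMap)
    (g := AffineMap.const ℝ E c) (fun _ hx => h.apply_eq hx) hu

theorem pyramidalExt (h : IsBeyond P B u g c) (hP : IsPolytope P) (hB : IsPolytope B)
    (hne : B.Nonempty) : PyramidalExt P (convexHull ℝ (insert u P)) := by
  have hclosure : closure (convexHull ℝ (insert u P) \ P) = convexHull ℝ (insert u B) :=
    h.closure_diff hP.convex (hne.mono h.subset) hB
  refine ⟨hP, hP.convexHull_insert u, (subset_insert u P).trans (subset_convexHull ℝ _), ?_, ?_⟩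
  · exact ⟨B, u, hB, h.notMem_affineSpan, by rw [hclosure, union_singleton]⟩
  · rw [hclosure, h.convexHull_insert_inter]
    exact ⟨h.isExposed, (hB.polyDim_convexHull_insert hne h.notMem_affineSpan).symm⟩

end IsBeyond

end Stacking

section Slopes

theorem exists_slope_forall_le_exists_eq {α : Type*} {T : Set α} (hT : T.Finite)
    (hne : T.Nonempty) {f g : α → ℝ} {v : α} (hf : ∀ p ∈ T, f v < f p) :
    ∃ b : ℝ, (∀ p ∈ T, g v + b * f v ≤ g p + b * f p) ∧
      ∃ q ∈ T, g q + b * f q = g v + b * f v := by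
  obtain ⟨q, hq, hmin⟩ := T.exists_min_image (fun p => (g p - g v) / (f p - f v)) hT hne
  refine ⟨-((g q - g v) / (f q - f v)), fun p hp => ?_, q, hq, ?_⟩
  · have hslope := (le_div_iff₀ (sub_pos.2 (hf p hp))).1 (hmin p hp)
    linarith
  · have hslope := div_mul_cancel₀ (g q - g v) (sub_pos.2 (hf q hq)).ne'
    linarith

theorem exists_slope_forall_lt {α : Type*} {T : Set α} (hT : T.Finite) {f g : α → ℝ} {v : α}
    (hf : ∀ p ∈ T, f v < f p) : ∃ b : ℝ, ∀ p ∈ T, g v + b * f v < g p + b * f p := by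
  have hlarge : ∀ᶠ b : ℝ in Filter.atTop, ∀ p ∈ T, g v - g p < b * (f p - f v) :=
    (Filter.eventually_all_finite hT).2 fun p hp =>
      (Filter.tendsto_id.atTop_mul_const (sub_pos.2 (hf p hp))).eventually_gt_atTop _
  obtain ⟨b, hb⟩ := hlarge.exists
  exact ⟨b, fun p hp => by linarith [hb p hp]⟩

end Slopes

section Coordinates

variable {E : Type*} [NormedAddCommGroup E] [NormedSpace ℝ E] {S : Set E} {f g : E →L[ℝ] ℝ}

theorem injOn_prod_swap (h : InjOn (f.prod g) S) : InjOn (g.prod f) S := fun _ hx _ hy hxy =>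
  h hx hy (Prod.ext (congrArg Prod.snd hxy) (congrArg Prod.fst hxy))

theorem injOn_prod_add_smul (h : InjOn (f.prod g) S) (b : ℝ) :
    InjOn (f.prod (g + b • f)) S := by
  intro x hx y hy hxy
  have hf : f x = f y := congrArg Prod.fst hxy
  have hg : g x + b * f x = g y + b * f y := congrArg Prod.snd hxy
  rw [hf] at hg
  exact h hx hy (Prod.ext hf (add_right_cancel hg))

theorem mem_segment_of_injOn_prod (hS : Convex ℝ S) (hinj : InjOn (f.prod g) S) {a b x : E}
    (ha : a ∈ S) (hb : b ∈ S) (hx : x ∈ S) (hga : g x = g a) (hgb : g b = g a)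
    (hf : f x ∈ Icc (f a) (f b)) : x ∈ segment ℝ a b := by
  refine mem_segment_of_injOn (L := (f.prod g : E →ₗ[ℝ] ℝ × ℝ)) hS hinj ha hb hx ?_
  have hfx : f x ∈ segment ℝ (f a) (f b) := (segment_eq_Icc (hf.1.trans hf.2)).ge hf
  have hpair : (f x, g a) ∈ segment ℝ (f a, g a) (f b, g a) :=
    (Prod.image_mk_segment_left (𝕜 := ℝ) (f a) (f b) (g a)).le ⟨f x, hfx, rfl⟩
  rw [← hga] at hpair
  simpa [hga, hgb] using hpair

theorem exists_injOn_prod [FiniteDimensional ℝ (affineSpan ℝ S).direction] (hdim : polyDim S ≤ 2)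
    {x y : E} (hx : x ∈ S) (hy : y ∈ S) (hxy : f x ≠ f y) :
    ∃ g : E →L[ℝ] ℝ, InjOn (f.prod g) S := by
  let V := (affineSpan ℝ S).direction
  let fV : V →ₗ[ℝ] ℝ := (f : E →ₗ[ℝ] ℝ).domRestrict V
  have hsub {a b : E} (ha : a ∈ S) (hb : b ∈ S) : a - b ∈ V :=
    AffineSubspace.vsub_mem_direction (subset_affineSpan ℝ S ha) (subset_affineSpan ℝ S hb)
  have hker : LinearMap.ker fV ≠ ⊤ := fun htop => hxy <| sub_eq_zero.1 <| by
    have hmem : (⟨x - y, hsub hx hy⟩ : V) ∈ LinearMap.ker fV := htop ▸ Submodule.mem_top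
    simpa [fV] using hmem
  have hrank : Module.finrank ℝ (LinearMap.ker fV) ≤ 1 :=
    Nat.lt_succ_iff.1 ((Submodule.finrank_lt hker).trans_le hdim)
  obtain ⟨e, he⟩ := finrank_le_one_iff.1 hrank
  obtain ⟨g, -, hg⟩ := exists_dual_vector'' ℝ (e : E)
  refine ⟨g, fun a ha b hb hab => sub_eq_zero.1 ?_⟩
  have hfab : f a = f b := congrArg Prod.fst hab
  have hgab : g a = g b := congrArg Prod.snd hab
  obtain ⟨c, hc⟩ := he ⟨⟨a - b, hsub ha hb⟩, by simp [fV, hfab]⟩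
  have hce : c • (e : E) = a - b := congrArg (fun d : LinearMap.ker fV => (d : E)) hc
  have hnorm : c * ‖(e : E)‖ = 0 := by
    have := congrArg g hce
    simpa [hg, hgab] using this
  rw [← hce, smul_eq_zero]
  exact (mul_eq_zero.1 hnorm).imp_right norm_eq_zero.1

end Coordinates

section Edges

variable {E : Type*} [NormedAddCommGroup E] [NormedSpace ℝ E]

/-- In the plane with coordinates `f` (horizontal) and `g`, the segment from `w` to `z` is a lower
edge of the convex hull of `t`, or a lower vertex `w = z`: no point of `t` lies below the line
`g = g w` through it, and no point of `t` on this line lies to the right of `z`. -/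
structure IsLowerEdge (t : Set E) (f g : E →L[ℝ] ℝ) (w z : E) : Prop where
  left_mem : w ∈ t
  right_mem : z ∈ t
  apply_eq : g z = g w
  le : ∀ p ∈ t, g w ≤ g p
  lt : ∀ p ∈ t, f z < f p → g w < g p

/-- The lower edge from `w` to `z` is the first one that is visible from `v`: the vertical line
through `v` supports the convex hull of `t` from the left and touches it in `w`, above `v`. -/
structure IsFirstVisibleEdge (t : Set E) (v : E) (f g : E →L[ℝ] ℝ) (w z : E) : Prop
    extends IsLowerEdge t f g w z where
  left_le : ∀ p ∈ t, f w ≤ f p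
  apex_eq : f v = f w
  apex_lt : g v < g w

variable {S t : Set E} {f g : E →L[ℝ] ℝ} {u v w z : E}

theorem IsLowerEdge.exists_next (he : IsLowerEdge t f g w z) (ht : t.Finite)
    (hright : ∃ p ∈ t, f z < f p) :
    ∃ b < (0 : ℝ), ∃ z', f z < f z' ∧ IsLowerEdge t f (g + b • f) z z' := by
  have hgz : ∀ p ∈ {p ∈ t | f z < f p}, g z < g p := fun p hp =>
    he.apply_eq.trans_lt (he.lt p hp.1 hp.2)
  obtain ⟨b, hle, q, ⟨hqt, hzq⟩, hq⟩ := exists_slope_forall_le_exists_eq (f := f) (g := g)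
    (ht.subset (sep_subset t _)) hright fun p hp => hp.2
  have hb : b < 0 := by nlinarith [hgz q ⟨hqt, hzq⟩]
  have hsupport : ∀ p ∈ t, g z + b * f z ≤ g p + b * f p := fun p hp => by
    rcases lt_or_ge (f z) (f p) with hzp | hpz
    · exact hle p ⟨hp, hzp⟩
    · exact add_le_add (he.apply_eq.trans_le (he.le p hp)) (mul_le_mul_of_nonpos_left hpz hb.le)
  obtain ⟨z', ⟨hz't, hz'⟩, hmax⟩ := exists_max_image {p ∈ t | g p + b * f p = g z + b * f z} f
    (ht.subset (sep_subset t _)) ⟨q, hqt, hq⟩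
  exact ⟨b, hb, z', hzq.trans_le (hmax q ⟨hqt, hq⟩), he.right_mem, hz't, hz', hsupport,
    fun p hp hlt => (hsupport p hp).lt_of_ne fun heq => (hmax p ⟨hp, heq.symm⟩).not_gt hlt⟩

namespace IsFirstVisibleEdge

theorem left_le_right (he : IsFirstVisibleEdge t v f g w z) : f w ≤ f z :=
  he.left_le z he.right_mem

theorem pyramidalExt (he : IsFirstVisibleEdge t u f g w z) (ht : t.Finite) (hS : Convex ℝ S)
    (hinj : InjOn (f.prod g) S) (hsub : insert u t ⊆ S)
    (hsection : ∀ m ∈ convexHull ℝ (insert u t), g m = g w → f m ≤ f z) :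
    PyramidalExt (convexHull ℝ t) (convexHull ℝ (insert u t)) := by
  have hwz : segment ℝ w z ⊆ convexHull ℝ t := segment_subset_convexHull he.left_mem he.right_mem
  have hleft : ∀ m ∈ convexHull ℝ (insert u t), f w ≤ f m := fun m hm =>
    le_apply_of_mem_convexHull (f : E →ₗ[ℝ] ℝ)
      (forall_mem_insert.2 ⟨he.apex_eq.ge, he.left_le⟩) hm
  have hbeyond : IsBeyond (convexHull ℝ t) (segment ℝ w z) u g (g w) := by
    refine ⟨he.apex_lt, fun x => le_apply_of_mem_convexHull (g : E →ₗ[ℝ] ℝ) he.le, hwz,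
      fun m => ?_⟩
    rw [convexHull_insert_convexHull]
    constructor
    · exact fun hm => ⟨convexHull_mono (subset_insert u t) (hwz hm),
        apply_eq_of_mem_segment (g : E →ₗ[ℝ] ℝ) he.apply_eq.symm hm⟩
    · rintro ⟨hm, hgm⟩
      exact mem_segment_of_injOn_prod hS hinj (hsub (mem_insert_of_mem u he.left_mem))
        (hsub (mem_insert_of_mem u he.right_mem)) (convexHull_min hsub hS hm) hgm he.apply_eq
        ⟨hleft m hm, hsection m hm hgm⟩
  have hedge : IsPolytope (segment ℝ w z) := by
    rw [← convexHull_pair]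
    exact isPolytope_convexHull (toFinite _)
  rw [← convexHull_insert_convexHull]
  exact hbeyond.pyramidalExt (isPolytope_convexHull ht) hedge ⟨w, left_mem_segment ℝ w z⟩

theorem pyramidalExt_of_last (he : IsFirstVisibleEdge t u f g w z) (ht : t.Finite)
    (hS : Convex ℝ S) (hinj : InjOn (f.prod g) S) (hsub : insert u t ⊆ S)
    (hright : ∀ p ∈ t, f p ≤ f z) :
    PyramidalExt (convexHull ℝ t) (convexHull ℝ (insert u t)) := by
  refine he.pyramidalExt ht hS hinj hsub fun m hm _ => ?_
  refine convexHull_min (insert_subset ?_ hright) (convex_halfSpace_le (f : E →ₗ[ℝ] ℝ).isLinear _)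
    hm
  exact he.apex_eq.trans_le he.left_le_right

theorem pyramidalExt_of_next (he : IsFirstVisibleEdge t u f g w z) (ht : t.Finite)
    (hS : Convex ℝ S) (hinj : InjOn (f.prod g) S) (hsub : insert u t ⊆ S) {b : ℝ} {z' : E}
    (hb : b < 0) (hnext : IsLowerEdge t f (g + b • f) z z')
    (hu : (g + b • f) z ≤ (g + b • f) u) :
    PyramidalExt (convexHull ℝ t) (convexHull ℝ (insert u t)) := by
  refine he.pyramidalExt ht hS hinj hsub fun m hm hgm => ?_
  have hm' : g z + b * f z ≤ g m + b * f m :=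
    le_apply_of_mem_convexHull ((g + b • f : E →L[ℝ] ℝ) : E →ₗ[ℝ] ℝ)
      (forall_mem_insert.2 ⟨hu, hnext.le⟩) hm
  rw [hgm, he.apply_eq] at hm'
  exact (mul_le_mul_left_of_neg hb).1 (le_of_add_le_add_left hm')

theorem exists_isFirstVisibleEdge_insert (he : IsFirstVisibleEdge t v f g w z)
    {k : E →L[ℝ] ℝ} {z' : E} (hnext : IsLowerEdge t f k z z') (hz' : f z ≤ f z') (hv : k v < k z) :
    ∃ u ∈ segment ℝ w v, k u = k z ∧ f u = f w ∧ IsFirstVisibleEdge (insert u t) v f k u z' := by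
  obtain ⟨u, hu, hku⟩ :=
    exists_mem_segment_apply_eq (k : E →ₗ[ℝ] ℝ) hv.le (hnext.le w he.left_mem)
  rw [segment_symm] at hu
  have hfu : f u = f w := apply_eq_of_mem_segment (f : E →ₗ[ℝ] ℝ) he.apex_eq.symm hu
  have hright : f u ≤ f z' := hfu.trans_le (he.left_le_right.trans hz')
  exact ⟨u, hu, hku, hfu,
    { left_mem := mem_insert u t
      right_mem := mem_insert_of_mem u hnext.right_mem
      apply_eq := hnext.apply_eq.trans hku.symm
      le := forall_mem_insert.2 ⟨le_rfl, fun p hp => hku.trans_le (hnext.le p hp)⟩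
      lt := forall_mem_insert.2 ⟨fun hlt => absurd hright hlt.not_ge,
        fun p hp hlt => hku.trans_lt (hnext.lt p hp hlt)⟩
      left_le := forall_mem_insert.2 ⟨le_rfl, fun p hp => hfu.trans_le (he.left_le p hp)⟩
      apex_eq := he.apex_eq.trans hfu.symm
      apex_lt := hv.trans_eq hku.symm }⟩

theorem reflTransGen_of_mem_segment (he : IsFirstVisibleEdge t v f g w z) (ht : t.Finite)
    (hS : Convex ℝ S) (hinj : InjOn (f.prod g) S) (hsub : insert v t ⊆ S) {b : ℝ} {z' : E}
    (hb : b < 0) (hnext : IsLowerEdge t f (g + b • f) z z') (hu : u ∈ segment ℝ w v)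
    (hku : (g + b • f) z ≤ (g + b • f) u) :
    Relation.ReflTransGen PyramidalExt (convexHull ℝ t) (convexHull ℝ (insert u t)) := by
  have hfu : f u = f w := apply_eq_of_mem_segment (f : E →ₗ[ℝ] ℝ) he.apex_eq.symm hu
  have huS : u ∈ S := hS.segment_subset (hsub (mem_insert_of_mem v he.left_mem))
    (hsub (mem_insert v t)) hu
  have htS : t ⊆ S := (subset_insert v t).trans hsub
  have hgu : g u ≤ g w :=
    (apply_mem_Icc_of_mem_segment (g : E →ₗ[ℝ] ℝ) he.apex_lt.le (segment_symm ℝ w v ▸ hu)).2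
  rcases hgu.eq_or_lt with hgu | hgu
  · have huw : u = w := hinj huS (htS he.left_mem) (Prod.ext hfu hgu)
    rw [insert_eq_of_mem (huw ▸ he.left_mem)]
  · exact .single (pyramidalExt_of_next
      { he.toIsLowerEdge with left_le := he.left_le, apex_eq := hfu, apex_lt := hgu }
      ht hS hinj (insert_subset huS htS) hb hnext hku)

theorem reflTransGen (he : IsFirstVisibleEdge t v f g w z) (ht : t.Finite) (hS : Convex ℝ S)
    (hinj : InjOn (f.prod g) S) (hsub : insert v t ⊆ S) :
    Relation.ReflTransGen PyramidalExt (convexHull ℝ t) (convexHull ℝ (insert v t)) := by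
  induction hn : {p ∈ t | f z < f p}.ncard using Nat.strong_induction_on generalizing t g w z with
  | _ n ih =>
  by_cases hright : ∃ p ∈ t, f z < f p
  · obtain ⟨b, hb, z', hzz', hnext⟩ := he.exists_next ht hright
    rcases le_or_gt ((g + b • f) z) ((g + b • f) v) with hv | hv
    · exact .single (he.pyramidalExt_of_next ht hS hinj hsub hb hnext hv)
    obtain ⟨u, hu, hku, hfu, he'⟩ := he.exists_isFirstVisibleEdge_insert hnext hzz'.le hv
    have huv : u ∈ convexHull ℝ (insert v t) :=
      segment_subset_convexHull (mem_insert_of_mem v he.left_mem) (mem_insert v t) hu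
    have hsub' : insert v (insert u t) ⊆ S := by
      rw [insert_comm]
      exact insert_subset (convexHull_min hsub hS huv) hsub
    have hfewer : {p ∈ insert u t | f z' < f p}.ncard < n := by
      rw [← hn]
      refine ncard_lt_ncard ⟨?_, fun h => ?_⟩ (ht.subset (sep_subset t _))
      · rintro p ⟨rfl | hp, hlt⟩
        · exact absurd (hfu.trans_le he.left_le_right) (hzz'.trans hlt).not_ge
        · exact ⟨hp, hzz'.trans hlt⟩
      · exact lt_irrefl _ (h ⟨hnext.right_mem, hzz'⟩).2
    have hrest := ih _ hfewer he' (ht.insert u) (injOn_prod_add_smul hinj b) hsub' rfl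
    rw [insert_comm, convexHull_insert_eq_of_mem huv] at hrest
    exact (he.reflTransGen_of_mem_segment ht hS hinj hsub hb hnext hu hku.ge).trans hrest
  · push Not at hright
    exact .single (he.pyramidalExt_of_last ht hS hinj hsub hright)

end IsFirstVisibleEdge

theorem exists_isFirstVisibleEdge [FiniteDimensional ℝ (affineSpan ℝ S).direction]
    (hdim : polyDim S ≤ 2) (ht : t.Finite) (hne : t.Nonempty) (hsub : insert v t ⊆ S)
    (hv : v ∉ convexHull ℝ t) :
    ∃ (f g : E →L[ℝ] ℝ) (w : E), InjOn (f.prod g) S ∧ IsFirstVisibleEdge t v f g w w := by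
  obtain ⟨η, a, hva, hat⟩ := geometric_hahn_banach_point_closed (convex_convexHull ℝ t)
    (ht.isClosed_convexHull ℝ) hv
  have hη : ∀ p ∈ t, η v < η p := fun p hp => hva.trans (hat p (subset_convexHull ℝ t hp))
  obtain ⟨x, hx⟩ := hne
  obtain ⟨κ, hκ⟩ := exists_injOn_prod hdim (hsub (mem_insert v t))
    (hsub (mem_insert_of_mem v hx)) (hη x hx).ne
  obtain ⟨b, hle, q, hqt, hq⟩ := exists_slope_forall_le_exists_eq (g := κ) ht ⟨x, hx⟩ hη
  let f : E →L[ℝ] ℝ := κ + b • η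
  obtain ⟨w, ⟨hwt, hfw⟩, hmin⟩ := exists_min_image {p ∈ t | f p = f v} η
    (ht.subset (sep_subset t _)) ⟨q, hqt, hq⟩
  obtain ⟨M, hM⟩ := exists_slope_forall_lt (T := {p ∈ t | f w < f p}) (f := f) (g := η) (v := w)
    (ht.subset (sep_subset t _)) fun p hp => hp.2
  have hleft : ∀ p ∈ t, f w ≤ f p := fun p hp => hfw.trans_le (hle p hp)
  refine ⟨f, η + M • f, w, injOn_prod_add_smul (injOn_prod_swap (injOn_prod_add_smul hκ b)) M,
    { left_mem := hwt
      right_mem := hwt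
      apply_eq := rfl
      le := fun p hp => ?_
      lt := fun p hp hlt => hM p ⟨hp, hlt⟩
      left_le := hleft
      apex_eq := hfw.symm
      apex_lt := ?_ }⟩
  · rcases (hleft p hp).eq_or_lt with heq | hlt
    · exact add_le_add (hmin p ⟨hp, heq.symm.trans hfw⟩) (congrArg (M * ·) heq).le
    · exact (hM p ⟨hp, hlt⟩).le
  · exact add_lt_add_of_lt_of_le (hη w hwt) (congrArg (M * ·) hfw).ge

end Edges

section Growth

variable {E : Type*} [NormedAddCommGroup E] [NormedSpace ℝ E] {S t : Set E}

theorem reflTransGen_convexHull_insert [FiniteDimensional ℝ (affineSpan ℝ S).direction]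
    (hS : Convex ℝ S) (hdim : polyDim S ≤ 2) (ht : t.Finite) (hne : t.Nonempty) {v : E}
    (hsub : insert v t ⊆ S) :
    Relation.ReflTransGen PyramidalExt (convexHull ℝ t) (convexHull ℝ (insert v t)) := by
  by_cases hv : v ∈ convexHull ℝ t
  · rw [convexHull_insert_eq_of_mem hv]
  · obtain ⟨f, g, w, hinj, he⟩ := exists_isFirstVisibleEdge hdim ht hne hsub hv
    exact he.reflTransGen ht hS hinj hsub

theorem reflTransGen_convexHull_union [FiniteDimensional ℝ (affineSpan ℝ S).direction]
    (hS : Convex ℝ S) (hdim : polyDim S ≤ 2) (ht : t.Finite) (hne : t.Nonempty) (htS : t ⊆ S)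
    {r : Set E} (hr : r.Finite) (hrS : r ⊆ S) :
    Relation.ReflTransGen PyramidalExt (convexHull ℝ t) (convexHull ℝ (r ∪ t)) := by
  induction r, hr using Set.Finite.induction_on with
  | empty => rw [empty_union]
  | @insert v r _ hr ih =>
    obtain ⟨hvS, hrS⟩ := insert_subset_iff.1 hrS
    rw [insert_union]
    exact (ih hrS).trans (reflTransGen_convexHull_insert hS hdim (hr.union ht) hne.inr
      (insert_subset hvS (union_subset hrS htS)))

end Growth

theorem stmt12_general {E : Type*} [NormedAddCommGroup E] [NormedSpace ℝ E] (P Q : Set E)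
    (hP : IsPolytope P) (hQ : IsPolytope Q) (hne : P.Nonempty) (hPQ : P ⊆ Q)
    (hdim : polyDim Q ≤ 2) : Relation.ReflTransGen PyramidalExt P Q := by
  have := hQ.finiteDimensional_direction
  have hconvex : Convex ℝ Q := hQ.convex
  obtain ⟨s, rfl⟩ := hP
  obtain ⟨r, hr⟩ := hQ
  have hsQ : (s : Set E) ⊆ Q := (subset_convexHull ℝ _).trans hPQ
  have hrQ : (r : Set E) ⊆ Q := hr ▸ subset_convexHull ℝ _
  have hunion : convexHull ℝ (r ∪ s : Set E) = Q :=
    (convexHull_min (union_subset hrQ hsQ) hconvex).antisymm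
      (hr.trans_subset (convexHull_mono subset_union_left))
  exact hunion ▸ reflTransGen_convexHull_union hconvex hdim s.finite_toSet
    (convexHull_nonempty_iff.1 hne) hsQ r.finite_toSet hrQ

theorem stmt12 (P Q : Set (EuclideanSpace ℝ (Fin 2)))
    (hP : IsPolytope P) (hQ : IsPolytope Q) (hne : P.Nonempty) (hPQ : P ⊆ Q) :
    Relation.ReflTransGen PyramidalExt P Q :=
  stmt12_general P Q hP hQ hne hPQ <|
    (Submodule.finrank_le _).trans_eq finrank_euclideanSpace_fin
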